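/- Let w be a non-increasing positive function on I=(0,a), 0<a≤∞, that is regular: W(t)=∫₀ᵗ w dm ≤ C·t·w(t) for some C ≥ 1 and all t∈I. Let f₁,…,fₙ be measurable functions on I, each with f_i* finite and integrable on (0,x) for all x∈I, and let v₁,…,vₙ : I→[0,∞) be measurable with v_i* = w (a.e.) and supp f_i ⊆ supp v_i for each i. Then for every x ∈ (0, ∫_I w dm), ∫₀ˣ ((Σᵢ fᵢ)*/w)^{*,w} dm ≤ C·Σᵢ ∫₀ˣ (fᵢ/vᵢ)^{*,vᵢ} dm, with the convention fᵢ/vᵢ = 0 off supp fᵢ, where (Σᵢ fᵢ)* is the decreasing rearrangement of |Σᵢ fᵢ|. -/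

import Mathlib

open MeasureTheory Set Filter
open scoped ENNReal

/-- The interval `(0, a)` for `a : ℝ≥0∞` (equals `(0,∞)` when `a = ∞`). -/
def Iset (a : ℝ≥0∞) : Set ℝ := {x : ℝ | 0 < x ∧ ENNReal.ofReal x < a}

/-- Lebesgue measure restricted to the interval `(0,a)`. -/
noncomputable def volI (a : ℝ≥0∞) : Measure ℝ := volume.restrict (Iset a)

/-- Decreasing rearrangement of an `ℝ≥0∞`-valued function with respect to a measure `μ`:
`f^{*,μ}(t) = inf {s > 0 : μ({f > s}) ≤ t}`. -/
noncomputable def rearrE (μ : Measure ℝ) (f : ℝ → ℝ≥0∞) (t : ℝ) : ℝ≥0∞ :=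
  sInf {s : ℝ≥0∞ | 0 < s ∧ μ {x | s < f x} ≤ ENNReal.ofReal t}

/-- Decreasing rearrangement of a real function with respect to a measure `μ` on `ℝ`:
`f^{*,μ}(t) = inf {s > 0 : μ({|f| > s}) ≤ t}`. -/
noncomputable def rearr (μ : Measure ℝ) (f : ℝ → ℝ) (t : ℝ) : ℝ≥0∞ :=
  rearrE μ (fun x => ENNReal.ofReal |f x|) t

/-- The measure `w·dm` on the set `I`. -/
noncomputable def wMeas (I : Set ℝ) (w : ℝ → ℝ) : Measure ℝ :=
  (volume.restrict I).withDensity (fun t => ENNReal.ofReal (w t))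

/-- `W(t) = ∫₀ᵗ w dm`. -/
noncomputable def Wfun (w : ℝ → ℝ) (t : ℝ) : ℝ := ∫ s in Set.Ioo (0:ℝ) t, w s

/-- `b = ∫_I w dm` as an extended real number. -/
noncomputable def bval (a : ℝ≥0∞) (w : ℝ → ℝ) : ℝ≥0∞ := ∫⁻ x in Iset a, ENNReal.ofReal (w x)

theorem rearrE_lt_iff (μ : Measure ℝ) (g : ℝ → ℝ≥0∞) (t : ℝ) (r : ℝ≥0∞) :
    r < rearrE μ g t ↔ ENNReal.ofReal t < μ {x | r < g x} := by
  constructor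
  · intro h
    by_contra! hc
    refine absurd h (not_lt.2 ?_)
    refine le_of_forall_gt_imp_ge_of_dense fun s hs => sInf_le ⟨pos_of_gt hs, ?_⟩
    exact (measure_mono fun x (hx : s < g x) => hs.trans hx).trans hc
  · intro h
    by_contra! hc
    refine absurd h (not_lt.2 ?_)
    rcases eq_or_ne r ∞ with rfl | hr
    · simp
    have key : ∀ s, r < s → μ {x | s < g x} ≤ ENNReal.ofReal t := by
      intro s hs
      obtain ⟨s', hs', hlt⟩ := sInf_lt_iff.1 (lt_of_le_of_lt hc hs)
      exact (measure_mono fun x (hx : s < g x) => hlt.trans hx).trans hs'.2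
    obtain ⟨u, hu, hur, hul⟩ := exists_seq_strictAnti_tendsto' (x := r) (y := ∞) (lt_top_iff_ne_top.2 hr)
    have hU : {x | r < g x} = ⋃ n, {x | u n < g x} := by
      ext y
      simp only [mem_ofPred_eq, mem_iUnion]
      constructor
      · intro hy
        exact (hul.eventually (gt_mem_nhds hy)).exists
      · rintro ⟨n, hn⟩
        exact (hur n).1.trans hn
    rw [hU, Monotone.measure_iUnion]
    · exact iSup_le fun n => key _ (hur n).1
    · intro m n hmn y hy
      exact lt_of_le_of_lt (hu.antitone hmn) hy

theorem rearrE_le_iff (μ : Measure ℝ) (g : ℝ → ℝ≥0∞) (t : ℝ) (r : ℝ≥0∞) :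
    rearrE μ g t ≤ r ↔ μ {x | r < g x} ≤ ENNReal.ofReal t := by
  simpa using (rearrE_lt_iff μ g t r).not

theorem rearrE_antitone (μ : Measure ℝ) (g : ℝ → ℝ≥0∞) : Antitone (rearrE μ g) := by
  intro s t hst
  rw [rearrE_le_iff]
  exact ((rearrE_le_iff μ g s _).1 le_rfl).trans (ENNReal.ofReal_le_ofReal hst)

theorem rearrE_mono (μ : Measure ℝ) {g h : ℝ → ℝ≥0∞} (H : ∀ x, g x ≤ h x) (t : ℝ) :
    rearrE μ g t ≤ rearrE μ h t := by
  rw [rearrE_le_iff]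
  exact (measure_mono fun x (hx : _ < g x) => hx.trans_le (H x)).trans
    ((rearrE_le_iff μ h t _).1 le_rfl)

theorem rearrE_measurable (μ : Measure ℝ) (g : ℝ → ℝ≥0∞) : Measurable (rearrE μ g) :=
  (rearrE_antitone μ g).measurable

theorem vol_slab (A B : ℝ≥0∞) :
    volume.restrict (Ioi (0:ℝ)) {r : ℝ | B ≤ ENNReal.ofReal r ∧ ENNReal.ofReal r < A} = A - B := by
  have hm : MeasurableSet {r : ℝ | B ≤ ENNReal.ofReal r ∧ ENNReal.ofReal r < A} :=
    (measurableSet_le measurable_const ENNReal.measurable_ofReal).inter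
      (measurableSet_lt ENNReal.measurable_ofReal measurable_const)
  rw [Measure.restrict_apply hm]
  rcases eq_or_ne B ∞ with rfl | hB
  · simp
  lift B to NNReal using hB
  rcases eq_or_ne A ∞ with rfl | hA
  · have : Ioi (B : ℝ) ⊆ {r : ℝ | (B : ℝ≥0∞) ≤ ENNReal.ofReal r ∧ ENNReal.ofReal r < ∞} ∩ Ioi 0 := by
      intro r (hr : (B : ℝ) < r)
      refine ⟨⟨?_, ENNReal.ofReal_lt_top⟩, lt_of_le_of_lt B.2 hr⟩
      rw [← ENNReal.ofReal_coe_nnreal]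
      exact ENNReal.ofReal_le_ofReal hr.le
    have h2 := measure_mono (μ := volume) this
    rw [Real.volume_Ioi, top_le_iff] at h2
    rw [h2]; simp
  lift A to NNReal using hA
  have h1 : volume (Ico (B : ℝ) A) = (A : ℝ≥0∞) - B := by
    rw [Real.volume_Ico, ENNReal.ofReal_sub _ B.coe_nonneg]; simp
  rw [← h1]
  have e : {r : ℝ | (B : ℝ≥0∞) ≤ ENNReal.ofReal r ∧ ENNReal.ofReal r < A} ∩ Ioi 0
      = Ico (B : ℝ) A ∩ Ioi 0 := by
    ext r
    simp only [mem_inter_iff, mem_ofPred_eq, mem_Ioi, mem_Ico]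
    refine and_congr_left fun hr => ?_
    rw [← ENNReal.ofReal_coe_nnreal, ← ENNReal.ofReal_coe_nnreal,
      ENNReal.ofReal_le_ofReal_iff hr.le, ENNReal.ofReal_lt_ofReal_iff_of_nonneg hr.le]
  rw [e]
  refine measure_congr ?_
  have : (Ioi (0:ℝ) : Set ℝ) =ᵐ[volume] Ici 0 := Ioi_ae_eq_Ici
  refine ((ae_eq_refl _).inter this).trans ?_
  have h3 : Ico (B : ℝ) A ∩ Ici 0 = Ico (B : ℝ) A :=
    inter_eq_left.2 fun r hr => le_trans B.coe_nonneg hr.1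
  exact Filter.EventuallyEq.of_eq h3

theorem layer (μ : Measure ℝ) [SFinite μ] {A B : ℝ → ℝ≥0∞} (hA : Measurable A) (hB : Measurable B) :
    ∫⁻ y, (A y - B y) ∂μ
      = ∫⁻ r in Ioi (0:ℝ), μ {y | B y ≤ ENNReal.ofReal r ∧ ENNReal.ofReal r < A y} := by
  have hS : MeasurableSet {p : ℝ × ℝ | B p.1 ≤ ENNReal.ofReal p.2 ∧ ENNReal.ofReal p.2 < A p.1} :=
    (measurableSet_le (hB.comp measurable_fst) (ENNReal.measurable_ofReal.comp measurable_snd)).inter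
      (measurableSet_lt (ENNReal.measurable_ofReal.comp measurable_snd) (hA.comp measurable_fst))
  have h1 := Measure.prod_apply (μ := μ) (ν := volume.restrict (Ioi (0:ℝ))) hS
  have h2 := Measure.prod_apply_symm (μ := μ) (ν := volume.restrict (Ioi (0:ℝ))) hS
  rw [h1] at h2
  simp only [preimage_ofPred_eq] at h2
  rw [← h2]
  simp only [vol_slab]

theorem contraction (μ : Measure ℝ) [SFinite μ] {G V : ℝ → ℝ≥0∞} (hG : Measurable G)
    (hV : Measurable V) :
    ∫⁻ t in Ioi (0:ℝ), (rearrE μ G t - rearrE μ V t) ≤ ∫⁻ y, (G y - V y) ∂μ := by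
  rw [layer _ (rearrE_measurable μ G) (rearrE_measurable μ V), layer μ hG hV]
  refine lintegral_mono fun r => ?_
  simp only [rearrE_le_iff, rearrE_lt_iff]
  rw [vol_slab]
  refine le_measure_sdiff.trans (measure_mono ?_)
  rintro y ⟨h1, h2⟩
  exact ⟨not_lt.1 h2, h1⟩

theorem upper (μ : Measure ℝ) [SFinite μ] {g : ℝ → ℝ≥0∞} (hg : Measurable g) (s : ℝ≥0∞) (x : ℝ) :
    ∫⁻ t in Ioo 0 x, rearrE μ g t ≤ ∫⁻ y, (g y - s) ∂μ + ENNReal.ofReal x * s := by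
  have hle : ∀ t, rearrE μ (fun y => min (g y) s) t ≤ s := by
    intro t
    rw [rearrE_le_iff]
    simp
  calc ∫⁻ t in Ioo 0 x, rearrE μ g t
      ≤ ∫⁻ t in Ioo 0 x, ((rearrE μ g t - rearrE μ (fun y => min (g y) s) t) + s) := by
        refine lintegral_mono fun t => ?_
        exact le_tsub_add.trans (add_le_add_right (hle t) _)
    _ = (∫⁻ t in Ioo 0 x, (rearrE μ g t - rearrE μ (fun y => min (g y) s) t))
          + ENNReal.ofReal x * s := by
        rw [lintegral_add_right _ measurable_const]
        simp [mul_comm]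
    _ ≤ _ := by
        refine add_le_add ?_ le_rfl
        refine (lintegral_mono_set Ioo_subset_Ioi_self).trans
          ((contraction μ hg (hg.min measurable_const)).trans (le_of_eq ?_))
        refine lintegral_congr fun y => ?_
        rcases le_total (g y) s with h | h
        · simp [h, tsub_eq_zero_of_le h]
        · simp [h]

theorem lower (μ : Measure ℝ) [SFinite μ] {g : ℝ → ℝ≥0∞} (hg : Measurable g) (x : ℝ) :
    ∫⁻ y, (g y - rearrE μ g x) ∂μ + ENNReal.ofReal x * rearrE μ g x
      ≤ ∫⁻ t in Ioo 0 x, rearrE μ g t := by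
  set s := rearrE μ g x with hs
  calc ∫⁻ y, (g y - s) ∂μ + ENNReal.ofReal x * s
      ≤ (∫⁻ t in Ioo 0 x, (rearrE μ g t - s)) + ENNReal.ofReal x * s := by
        refine add_le_add ?_ le_rfl
        rw [layer μ hg measurable_const, layer _ (rearrE_measurable μ g) measurable_const]
        refine lintegral_mono fun r => ?_
        by_cases hr : s ≤ ENNReal.ofReal r
        · simp only [hr, true_and, rearrE_lt_iff]
          have h1 : μ {y | ENNReal.ofReal r < g y} ≤ ENNReal.ofReal x :=
            (rearrE_le_iff μ g x _).1 hr
          have h2 := vol_slab (μ {y | ENNReal.ofReal r < g y}) 0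
          simp only [zero_le, true_and, tsub_zero] at h2
          refine h2.symm.le.trans ?_
          have hm : MeasurableSet {t : ℝ | ENNReal.ofReal t < μ {y | ENNReal.ofReal r < g y}} :=
            measurableSet_lt ENNReal.measurable_ofReal measurable_const
          rw [Measure.restrict_apply hm, Measure.restrict_apply hm]
          refine measure_mono ?_
          rintro t ⟨ht, ht0⟩
          refine ⟨ht, ht0, ?_⟩
          exact (ENNReal.ofReal_lt_ofReal_iff_of_nonneg (le_of_lt ht0)).1 (lt_of_lt_of_le ht h1)
        · simp [hr]
    _ = ∫⁻ t in Ioo 0 x, ((rearrE μ g t - s) + s) := by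
        rw [lintegral_add_right _ measurable_const]
        simp [mul_comm]
    _ = _ := by
        refine setLIntegral_congr_fun measurableSet_Ioo fun t ht => ?_
        exact tsub_add_cancel_of_le (rearrE_antitone μ g ht.2.le)

theorem Iset_meas (a : ℝ≥0∞) : MeasurableSet (Iset a) :=
  measurableSet_Ioi.inter (measurableSet_lt ENNReal.measurable_ofReal measurable_const)

theorem sum_star (μ : Measure ℝ) [SFinite μ] (n : ℕ) (v : Fin n → ℝ → ℝ≥0∞) (s : Fin n → ℝ≥0∞)
    (hv : ∀ i, Measurable (v i)) (t : ℝ) :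
    ENNReal.ofReal t * rearrE μ (fun y => ∑ i, s i * v i y) t
      ≤ ∑ i, s i * ∫⁻ u in Ioo 0 t, rearrE μ (v i) u := by
  have hV : Measurable (fun y => ∑ i, s i * v i y) := by fun_prop
  calc ENNReal.ofReal t * rearrE μ (fun y => ∑ i, s i * v i y) t
      ≤ ∫⁻ u in Ioo 0 t, rearrE μ (fun y => ∑ i, s i * v i y) u := le_add_self.trans (lower μ hV t)
    _ ≤ ∫⁻ y, ((∑ i, s i * v i y) - ∑ i, s i * rearrE μ (v i) t) ∂μ
          + ENNReal.ofReal t * ∑ i, s i * rearrE μ (v i) t := upper μ hV _ t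
    _ ≤ ∫⁻ y, (∑ i, s i * (v i y - rearrE μ (v i) t)) ∂μ
          + ENNReal.ofReal t * ∑ i, s i * rearrE μ (v i) t := by
        gcongr with y
        rw [tsub_le_iff_right, ← Finset.sum_add_distrib]
        refine Finset.sum_le_sum fun i _ => ?_
        rw [← mul_add]
        gcongr
        exact le_tsub_add
    _ = ∑ i, s i * (∫⁻ y, (v i y - rearrE μ (v i) t) ∂μ + ENNReal.ofReal t * rearrE μ (v i) t) := by
        rw [lintegral_finsetSum _ (fun i _ => by fun_prop), Finset.mul_sum,
          ← Finset.sum_add_distrib]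
        refine Finset.sum_congr rfl fun i _ => ?_
        rw [lintegral_const_mul _ (by fun_prop)]
        ring
    _ ≤ _ := by
        gcongr with i
        exact lower μ (hv i) t

/-- If `w` is a regular non-increasing positive weight (`W(t) ≤ C·t·w(t)` on `I`)
then for measurable `f₁,…,fₙ ∈ L₁+L∞` and weights `v₁,…,vₙ ≥ 0` with `vᵢ* = w` and
`supp fᵢ ⊆ supp vᵢ`, for every `x ∈ (0, ∫_I w dm)`:
`∫₀ˣ ((Σᵢ fᵢ)*/w)^{*,w} ≤ C·Σᵢ ∫₀ˣ (fᵢ/vᵢ)^{*,vᵢ}`. -/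
theorem stmt_9 (a : ℝ≥0∞) (ha : 0 < a) (w : ℝ → ℝ) (C : ℝ) (hC : 1 ≤ C)
    (hw_pos : ∀ x ∈ Iset a, 0 < w x) (hw_anti : AntitoneOn w (Iset a)) (hw_meas : Measurable w)
    (hreg : ∀ t ∈ Iset a,
      (∫⁻ s in Set.Ioo 0 t, ENNReal.ofReal (w s)) ≤ ENNReal.ofReal (C * t * w t))
    (n : ℕ) (f v : Fin n → ℝ → ℝ)
    (hf_meas : ∀ i, Measurable (f i))
    (hf_fin : ∀ i, ∀ t ∈ Iset a, rearr (volI a) (f i) t ≠ ∞)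
    (hf_loc : ∀ i, ∀ x ∈ Iset a, ∫⁻ t in Set.Ioo 0 x, rearr (volI a) (f i) t ≠ ∞)
    (hv_meas : ∀ i, Measurable (v i)) (hv_nonneg : ∀ i, ∀ x ∈ Iset a, 0 ≤ v i x)
    (hv_star : ∀ i, ∀ᵐ t ∂(volI a), rearr (volI a) (v i) t = ENNReal.ofReal (w t))
    (hsupp : ∀ i, ∀ᵐ x ∂(volI a), v i x = 0 → f i x = 0)
    (x : ℝ) (hx : 0 < x) (hxb : ENNReal.ofReal x < bval a w) :
    ∫⁻ t in Set.Ioo 0 x,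
        rearrE (wMeas (Iset a) w)
          (fun s => rearr (volI a) (fun y => ∑ i, f i y) s / ENNReal.ofReal (w s)) t
      ≤ ENNReal.ofReal C *
          ∑ i, ∫⁻ t in Set.Ioo 0 x, rearr (wMeas (Iset a) (v i)) (fun y => f i y / v i y) t := by
  classical
  set μ := volI a with hμ
  haveI : SFinite μ := by rw [hμ, volI]; infer_instance
  have hS : ∀ u : ℝ → ℝ, SFinite (wMeas (Iset a) u) := fun u => by
    unfold wMeas; infer_instance
  set g : Fin n → ℝ → ℝ≥0∞ := fun i y => ENNReal.ofReal |f i y / v i y| with hg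
  have hgm : ∀ i, Measurable (g i) := fun i => by
    have := hf_meas i; have := hv_meas i
    simp only [hg]; fun_prop
  set s : Fin n → ℝ≥0∞ := fun i => rearrE (wMeas (Iset a) (v i)) (g i) x with hs
  set vv : Fin n → ℝ → ℝ≥0∞ := fun i y => ENNReal.ofReal |v i y| with hvv
  have hvvm : ∀ i, Measurable (vv i) := fun i => by
    have := hv_meas i
    simp only [hvv]; fun_prop
  set V : ℝ → ℝ≥0∞ := fun y => ∑ i, s i * vv i y with hVdef
  have hVm : Measurable V := by simp only [hVdef]; fun_prop
  set F : ℝ → ℝ≥0∞ := fun y => ENNReal.ofReal |∑ i, f i y| with hF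
  have hFm : Measurable F := by simp only [hF]; fun_prop
  -- pointwise bound for the rearrangement of V
  have hVstar : ∀ t ∈ Iset a,
      rearrE μ V t ≤ ENNReal.ofReal C * (∑ i, s i) * ENNReal.ofReal (w t) := by
    intro t ht
    have h1 := sum_star μ n vv s hvvm t
    have h2 : ∀ i, ∫⁻ u in Ioo 0 t, rearrE μ (vv i) u ≤ ENNReal.ofReal (C * t * w t) := by
      intro i
      refine le_trans (le_of_eq ?_) (hreg t ht)
      refine lintegral_congr_ae ?_
      have hsub : Ioo 0 t ⊆ Iset a := fun u hu =>
        ⟨hu.1, (ENNReal.ofReal_le_ofReal hu.2.le).trans_lt ht.2⟩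
      exact ae_mono (Measure.restrict_mono hsub le_rfl) (hv_star i)
    have h3 : ENNReal.ofReal t * rearrE μ V t
        ≤ ENNReal.ofReal t * (ENNReal.ofReal C * (∑ i, s i) * ENNReal.ofReal (w t)) := by
      refine h1.trans ((Finset.sum_le_sum fun i _ => mul_le_mul_right (h2 i) (s i)).trans
        (le_of_eq ?_))
      rw [← Finset.sum_mul, ENNReal.ofReal_mul (by have := ht.1; positivity),
        ENNReal.ofReal_mul (by positivity)]
      ring
    exact (ENNReal.mul_le_mul_iff_right (by simpa using ht.1) ENNReal.ofReal_ne_top).1 h3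
  have hrm : Measurable (rearrE μ F) := rearrE_measurable μ F
  have hQm : Measurable (fun y => rearrE μ F y / ENNReal.ofReal (w y)) := by fun_prop
  -- the `L¹` part
  have hL1 : ∫⁻ y, (rearrE μ F y / ENNReal.ofReal (w y) - ENNReal.ofReal C * (∑ i, s i))
      ∂(wMeas (Iset a) w) ≤ ∑ i, ∫⁻ y, (g i y - s i) ∂(wMeas (Iset a) (v i)) := by
    unfold wMeas
    rw [lintegral_withDensity_eq_lintegral_mul _ (by fun_prop) (by fun_prop)]
    calc _ ≤ ∫⁻ t in Iset a, (rearrE μ F t - rearrE μ V t) := by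
          refine setLIntegral_mono' (Iset_meas a) fun t ht => ?_
          have hw0 : ENNReal.ofReal (w t) ≠ 0 := by simpa using hw_pos t ht
          rw [Pi.mul_apply, mul_comm, ENNReal.sub_mul (fun _ _ => ENNReal.ofReal_ne_top),
            ENNReal.div_mul_cancel hw0 ENNReal.ofReal_ne_top]
          exact tsub_le_tsub_left (hVstar t ht) _
      _ ≤ ∫⁻ t in Ioi 0, (rearrE μ F t - rearrE μ V t) := lintegral_mono_set fun t ht => ht.1
      _ ≤ ∫⁻ y, (F y - V y) ∂μ := contraction μ hFm hVm
      _ ≤ ∫⁻ y, (∑ i, ENNReal.ofReal (v i y) * (g i y - s i)) ∂μ := by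
          refine lintegral_mono_ae ?_
          filter_upwards [ae_all_iff.2 hsupp, ae_restrict_mem (Iset_meas a)] with y hy hyI
          rw [tsub_le_iff_right, ← Finset.sum_add_distrib]
          have hFs : F y ≤ ∑ i, ENNReal.ofReal |f i y| := by
            rw [← ENNReal.ofReal_sum_of_nonneg (fun i _ => abs_nonneg _)]
            exact ENNReal.ofReal_le_ofReal (Finset.abs_sum_le_sum_abs _ _)
          refine hFs.trans (Finset.sum_le_sum fun i _ => ?_)
          have hv0 := hv_nonneg i y hyI
          have e : ENNReal.ofReal |f i y| = ENNReal.ofReal (v i y) * g i y := by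
            simp only [hg]
            rw [← ENNReal.ofReal_mul hv0]
            congr 1
            by_cases h0 : v i y = 0
            · simp [h0, hy i h0]
            · rw [abs_div, abs_of_nonneg hv0]; field_simp
          have e2 : vv i y = ENNReal.ofReal (v i y) := by simp only [hvv, abs_of_nonneg hv0]
          rw [e, e2, mul_comm (s i), ← mul_add]
          gcongr
          exact le_tsub_add
      _ = _ := by
          rw [lintegral_finsetSum _ (fun i _ => by have := hv_meas i; fun_prop)]
          refine Finset.sum_congr rfl fun i _ => ?_
          have := hv_meas i
          rw [lintegral_withDensity_eq_lintegral_mul _ (by fun_prop) (by fun_prop)]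
          rfl
  have hC1 : (1 : ℝ≥0∞) ≤ ENNReal.ofReal C := by simpa using hC
  haveI := hS w
  calc _ ≤ _ := upper (wMeas (Iset a) w) hQm (ENNReal.ofReal C * (∑ i, s i)) x
    _ ≤ ENNReal.ofReal C * (∑ i, ∫⁻ y, (g i y - s i) ∂(wMeas (Iset a) (v i)))
          + ENNReal.ofReal x * (ENNReal.ofReal C * (∑ i, s i)) := by
        gcongr
        exact hL1.trans (le_mul_of_one_le_left' hC1)
    _ = ENNReal.ofReal C * ∑ i, (∫⁻ y, (g i y - s i) ∂(wMeas (Iset a) (v i))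
          + ENNReal.ofReal x * s i) := by
        rw [Finset.sum_add_distrib, ← Finset.mul_sum]; ring
    _ ≤ _ := by
        gcongr with i
        haveI := hS (v i)
        exact lower (wMeas (Iset a) (v i)) (hgm i) x
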